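/- Accepting Runs Characterise Positive Maximal Traces: τ⃗_{1..n} is a positive maximal right-hand trace following a path ν⃗ in a cyclic proof P if and only if ρ is an accepting run of ℬ^{(P,ν⃗_1)}_{(τ', τ⃗_1)} where either (i) ρ = q_𝒞 ν⃗_1 (ν⃗_1, τ⃗_1) … ν⃗_n (ν⃗_n, τ⃗_n), in which case either τ⃗ is fully maximal or τ⃗_n is ground with respect to ν⃗_n; or (ii) ρ = q_𝒞 ν⃗_1 (ν⃗_1, τ⃗_1) … ν⃗_n (ν⃗_n, τ⃗_n) (T_{ν⃗_n}(τ⃗_n), τ⃗_n) ⊥, in which case τ⃗ is partially maximal. Moreover V(ρ) = Θ_ν⃗(τ⃗). -/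

import Mathlib

noncomputable section

/-- We work with ordinals in universe 0. -/
abbrev Ordl : Type 1 := Ordinal.{0}

/-- Reverse ordinal sum: `revSum d k = d (k-1) + ⋯ + d 0` (and `0` for `k = 0`). -/
def revSum (d : ℕ → Ordl) : ℕ → Ordl
  | 0 => 0
  | k + 1 => d k + revSum d k

/-- An abstract entailment system: antecedents, consequents, models, the two
satisfaction relations, and finite sets of trace values for antecedents and
consequents (drawn from the disjoint types `TA` and `TC`). -/
structure CES where
  A : Type
  C : Type
  M : Type
  TA : Type
  TC : Type
  satA : M → A → Prop
  satC : M → C → Prop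
  tvA : A → Finset TA
  tvC : C → Finset TC

/-- Validity of a sequent `A ⊢ C`: every model of the antecedent satisfies the consequent. -/
def CES.Valid (S : CES) (s : S.A × S.C) : Prop :=
  ∀ m : S.M, S.satA m s.1 → S.satC m s.2

/-- A cyclic pre-proof: a finite directed graph whose nodes carry sequents and
(ordered) lists of children, together with the trace pair functions `δ1` (on
antecedent trace values) and `δ2` (on consequent trace values) attached to the
rule instance at each node/premise.  `δ1`/`δ2` are partial (Option-valued) and
only defined along edges, on trace values of the respective sequents. -/
structure PreProof (S : CES) where
  Node : Type
  [fintypeNode : Fintype Node]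
  [decEqNode : DecidableEq Node]
  seqOf : Node → S.A × S.C
  children : Node → List Node
  δ1 : Node → Node → S.TA → S.TA → Option Ordl
  δ2 : Node → Node → S.TC → S.TC → Option Ordl
  δ1_dom : ∀ ν ν' τ τ', (δ1 ν ν' τ τ').isSome →
    ν' ∈ children ν ∧ τ ∈ S.tvA (seqOf ν).1 ∧ τ' ∈ S.tvA (seqOf ν').1
  δ2_dom : ∀ ν ν' τ τ', (δ2 ν ν' τ τ').isSome →
    ν' ∈ children ν ∧ τ ∈ S.tvC (seqOf ν).2 ∧ τ' ∈ S.tvC (seqOf ν').2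

attribute [instance] PreProof.fintypeNode PreProof.decEqNode

/-- An ordinal trace function: partial ordinal-valued functions on
(antecedent resp. consequent) trace value/model pairs, defined at least on all
`(τ, m)` with `τ ∈ tvA A` and `m ⊨ A`. -/
structure OTF (S : CES) where
  OA : S.TA → S.M → Option Ordl
  OC : S.TC → S.M → Option Ordl
  definedA : ∀ (a : S.A) (τ : S.TA) (m : S.M),
    τ ∈ S.tvA a → S.satA m a → (OA τ m).isSome

/-- `1̲`: the least value taken by the ordinal trace function. -/
def OTF.leastVal {S : CES} (O : OTF S) : Ordl :=
  sInf {o : Ordl | (∃ τ m, O.OA τ m = some o) ∨ (∃ τ m, O.OC τ m = some o)}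

/-- A sequent `s` equates trace values `τa` and `τc`: whenever `s` is valid,
every model of the antecedent realizing `τc` realizes `τa` with the same size. -/
def OTF.Equates {S : CES} (O : OTF S) (s : S.A × S.C) (τa : S.TA) (τc : S.TC) : Prop :=
  S.Valid s → ∀ m : S.M, S.satA m s.1 →
    ∀ o : Ordl, O.OC τc m = some o → O.OA τa m = some o

namespace PreProof

variable {S : CES}

/-- A node is axiomatic when its rule instance has no premises. -/
def Axiomatic (P : PreProof S) (ν : P.Node) : Prop := P.children ν = []

/-- `νs 0, …, νs (n-1)` is a (finite) path in the pre-proof. -/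
def IsPath (P : PreProof S) (n : ℕ) (νs : ℕ → P.Node) : Prop :=
  ∀ i, i + 1 < n → νs (i + 1) ∈ P.children (νs i)

/-- An infinite path in the pre-proof. -/
def InfPath (P : PreProof S) (νs : ℕ → P.Node) : Prop :=
  ∀ i, νs (i + 1) ∈ P.children (νs i)

/-- A left-hand trace `τs 0, …, τs (k-1)` follows (an initial segment of) the
path `νs 0, …, νs (n-1)`. -/
def FollowsL (P : PreProof S) (n : ℕ) (νs : ℕ → P.Node) (k : ℕ) (τs : ℕ → S.TA) : Prop :=
  k ≤ n ∧ (∀ i < k, τs i ∈ S.tvA (P.seqOf (νs i)).1) ∧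
    ∀ i, i + 1 < k → (P.δ1 (νs i) (νs (i + 1)) (τs i) (τs (i + 1))).isSome

/-- A right-hand trace `τs 0, …, τs (k-1)` follows (an initial segment of) the
path `νs 0, …, νs (n-1)`. -/
def FollowsR (P : PreProof S) (n : ℕ) (νs : ℕ → P.Node) (k : ℕ) (τs : ℕ → S.TC) : Prop :=
  k ≤ n ∧ (∀ i < k, τs i ∈ S.tvC (P.seqOf (νs i)).2) ∧
    ∀ i, i + 1 < k → (P.δ2 (νs i) (νs (i + 1)) (τs i) (τs (i + 1))).isSome

/-- The `δ1`-value of the `i`-th step of a left-hand trace along a path. -/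
def stepL (P : PreProof S) (νs : ℕ → P.Node) (τs : ℕ → S.TA) (i : ℕ) : Ordl :=
  (P.δ1 (νs i) (νs (i + 1)) (τs i) (τs (i + 1))).getD 0

/-- The `δ2`-value of the `i`-th step of a right-hand trace along a path. -/
def stepR (P : PreProof S) (νs : ℕ → P.Node) (τs : ℕ → S.TC) (i : ℕ) : Ordl :=
  (P.δ2 (νs i) (νs (i + 1)) (τs i) (τs (i + 1))).getD 0

/-- Size `Θ` of a left-hand trace of length `k` along a path: the *reverse*
ordinal sum `δ1(τ_{k-2},τ_{k-1}) + ⋯ + δ1(τ_0,τ_1)`. -/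
def thetaL (P : PreProof S) (νs : ℕ → P.Node) (τs : ℕ → S.TA) (k : ℕ) : Ordl :=
  revSum (P.stepL νs τs) (k - 1)

/-- Size `Θ` of a right-hand trace of length `k` along a path (reverse sum). -/
def thetaR (P : PreProof S) (νs : ℕ → P.Node) (τs : ℕ → S.TC) (k : ℕ) : Ordl :=
  revSum (P.stepR νs τs) (k - 1)

/-- The global soundness condition: every infinite path has a tail followed by
an infinitely progressing left-hand trace. -/
def GlobalSound (P : PreProof S) : Prop :=
  ∀ νs : ℕ → P.Node, P.InfPath νs →
    ∃ (k : ℕ) (τs : ℕ → S.TA),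
      (∀ i, (P.δ1 (νs (k + i)) (νs (k + i + 1)) (τs i) (τs (i + 1))).isSome) ∧
      ∀ N, ∃ i, N ≤ i ∧
        ∃ α : Ordl, P.δ1 (νs (k + i)) (νs (k + i + 1)) (τs i) (τs (i + 1)) = some α ∧ 0 < α

/-- A (valid) cyclic proof: a pre-proof satisfying the global soundness
condition; consequently (and we record it as part of the notion) all sequents
occurring in it are valid. -/
def IsCyclicProof (P : PreProof S) : Prop :=
  P.GlobalSound ∧ ∀ ν : P.Node, S.Valid (P.seqOf ν)

/-- The descending counter-model property of an ordinal trace function. -/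
def DCM (P : PreProof S) (O : OTF S) : Prop :=
  ∀ (ν : P.Node) (m : S.M),
    S.satA m (P.seqOf ν).1 → ¬ S.satC m (P.seqOf ν).2 →
    ∃ ν' ∈ P.children ν, ∃ m' : S.M,
      S.satA m' (P.seqOf ν').1 ∧ ¬ S.satC m' (P.seqOf ν').2 ∧
      ∀ (τ τ' : S.TA) (α : Ordl), P.δ1 ν ν' τ τ' = some α →
        ∀ o : Ordl, O.OA τ m = some o →
          ∃ o' : Ordl, O.OA τ' m' = some o' ∧ o' + α ≤ o

/-- A right-hand trace value is terminal for a node when it has no successor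
trace value towards any premise. -/
def TerminalR (P : PreProof S) (ν : P.Node) (σ : S.TC) : Prop :=
  ∀ ν' ∈ P.children ν, ∀ σ', P.δ2 ν ν' σ σ' = none

/-- Defining property of the exclusion predicate: a rule instance (node)
excludes a consequent trace value only if no model of the antecedent realizes
it. -/
def ExclOK (P : PreProof S) (O : OTF S) (Excl : P.Node → S.TC → Prop) : Prop :=
  ∀ (ν : P.Node) (σ : S.TC), Excl ν σ →
    ∀ m : S.M, S.satA m (P.seqOf ν).1 → O.OC σ m = none

/-- A consequent trace value is ground w.r.t. a node: if the node's sequent is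
valid then the value is realized only with the least possible size. -/
def Ground (P : PreProof S) (O : OTF S) (ν : P.Node) (σ : S.TC) : Prop :=
  S.Valid (P.seqOf ν) → ∀ m : S.M, S.satA m (P.seqOf ν).1 →
    ∀ o : Ordl, O.OC σ m = some o → o = O.leastVal

/-- The trace value ordering relation `τ2 ∼^ν_P τ1` (`∼` is `<` when
`strict = true` and `≤` otherwise). -/
def TVO (P : PreProof S) (O : OTF S) (Excl : P.Node → S.TC → Prop) (strict : Bool)
    (ν0 : P.Node) (τ1 : S.TA) (τ2 : S.TC) : Prop :=
  ∀ (n : ℕ) (νs : ℕ → P.Node) (τs : ℕ → S.TC),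
    1 ≤ n → P.IsPath n νs → νs 0 = ν0 → τs 0 = τ2 →
    P.FollowsR n νs n τs →
    P.TerminalR (νs (n - 1)) (τs (n - 1)) →
    ¬ Excl (νs (n - 1)) (τs (n - 1)) →
    ∃ (k : ℕ) (τs' : ℕ → S.TA),
      1 ≤ k ∧ k ≤ n ∧ τs' 0 = τ1 ∧ P.FollowsL n νs k τs' ∧
      (if strict then P.thetaR νs τs n < P.thetaL νs τs' k
        else P.thetaR νs τs n ≤ P.thetaL νs τs' k) ∧
      (P.Ground O (νs (n - 1)) (τs (n - 1)) ∨
        (P.Axiomatic (νs (n - 1)) ∧ k = n ∧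
          O.Equates (P.seqOf (νs (n - 1))) (τs' (n - 1)) (τs (n - 1))))

/-- The descending model property of an ordinal trace function. -/
def DMP (P : PreProof S) (O : OTF S) : Prop :=
  ∀ ν : P.Node, P.children ν ≠ [] →
    S.Valid (P.seqOf ν) → (∀ ν' ∈ P.children ν, S.Valid (P.seqOf ν')) →
    ∀ τ1 ∈ S.tvA (P.seqOf ν).1, ∀ τ2 ∈ S.tvC (P.seqOf ν).2,
    ∀ m : S.M, S.satA m (P.seqOf ν).1 →
    ∃ ν' ∈ P.children ν, ∃ m' : S.M,
      S.satA m' (P.seqOf ν').1 ∧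
      (P.TerminalR ν τ2 ∨ ∃ σ', (P.δ2 ν ν' τ2 σ').isSome) ∧
      (∀ (σ' : S.TA) (α : Ordl), P.δ1 ν ν' τ1 σ' = some α →
        ∀ o : Ordl, O.OA τ1 m = some o →
          ∃ o' : Ordl, O.OA σ' m' = some o' ∧ o' + α ≤ o) ∧
      (∀ (σ' : S.TC) (α : Ordl), P.δ2 ν ν' τ2 σ' = some α →
        ∀ o : Ordl, O.OC τ2 m = some o →
          ∃ o' : Ordl, O.OC σ' m' = some o' ∧ o ≤ o' + α)

/-- A sequence of models supports a left-hand trace along a path. -/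
def SupportsL (P : PreProof S) (O : OTF S) (n : ℕ) (νs : ℕ → P.Node) (k : ℕ)
    (τs : ℕ → S.TA) (ms : ℕ → S.M) : Prop :=
  P.FollowsL n νs k τs ∧
    (∀ i < k, S.satA (ms i) (P.seqOf (νs i)).1 ∧ (O.OA (τs i) (ms i)).isSome) ∧
    ∀ j, j + 1 < k → ∀ o o' : Ordl, O.OA (τs j) (ms j) = some o →
      O.OA (τs (j + 1)) (ms (j + 1)) = some o' →
      o' + P.stepL νs τs j ≤ o

/-- A sequence of models supports a right-hand trace along a path. -/
def SupportsR (P : PreProof S) (O : OTF S) (n : ℕ) (νs : ℕ → P.Node) (k : ℕ)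
    (τs : ℕ → S.TC) (ms : ℕ → S.M) : Prop :=
  P.FollowsR n νs k τs ∧
    (∀ i < k, S.satC (ms i) (P.seqOf (νs i)).2 ∧ (O.OC (τs i) (ms i)).isSome) ∧
    ∀ j, j + 1 < k → ∀ o o' : Ordl, O.OC (τs j) (ms j) = some o →
      O.OC (τs (j + 1)) (ms (j + 1)) = some o' →
      o ≤ o' + P.stepR νs τs j

/-- `(ν', τ')` is reachable from `(ν, τ)` on the left. -/
def ReachL (P : PreProof S) (ν : P.Node) (τ : S.TA) (ν' : P.Node) (τ' : S.TA) : Prop :=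
  ∃ (n : ℕ) (νs : ℕ → P.Node) (τs : ℕ → S.TA),
    1 ≤ n ∧ P.IsPath n νs ∧ P.FollowsL n νs n τs ∧
    νs 0 = ν ∧ τs 0 = τ ∧ νs (n - 1) = ν' ∧ τs (n - 1) = τ'

/-- `(ν', τ')` is reachable from `(ν, τ)` on the right. -/
def ReachR (P : PreProof S) (ν : P.Node) (τ : S.TC) (ν' : P.Node) (τ' : S.TC) : Prop :=
  ∃ (n : ℕ) (νs : ℕ → P.Node) (τs : ℕ → S.TC),
    1 ≤ n ∧ P.IsPath n νs ∧ P.FollowsR n νs n τs ∧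
    νs 0 = ν ∧ τs 0 = τ ∧ νs (n - 1) = ν' ∧ τs (n - 1) = τ'

/-- A left cycle along a path. -/
def IsCycleL (P : PreProof S) (n : ℕ) (νs : ℕ → P.Node) (τs : ℕ → S.TA) : Prop :=
  2 ≤ n ∧ P.IsPath n νs ∧ P.FollowsL n νs n τs ∧ νs (n - 1) = νs 0 ∧ τs (n - 1) = τs 0

/-- A right cycle along a path. -/
def IsCycleR (P : PreProof S) (n : ℕ) (νs : ℕ → P.Node) (τs : ℕ → S.TC) : Prop :=
  2 ≤ n ∧ P.IsPath n νs ∧ P.FollowsR n νs n τs ∧ νs (n - 1) = νs 0 ∧ τs (n - 1) = τs 0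

/-- A simple left cycle. -/
def IsSimpleCycleL (P : PreProof S) (n : ℕ) (νs : ℕ → P.Node) (τs : ℕ → S.TA) : Prop :=
  P.IsCycleL n νs τs ∧
    ∀ i j, 1 ≤ i → i < j → j ≤ n - 1 → ¬ (νs i = νs j ∧ τs i = τs j)

/-- A simple right cycle. -/
def IsSimpleCycleR (P : PreProof S) (n : ℕ) (νs : ℕ → P.Node) (τs : ℕ → S.TC) : Prop :=
  P.IsCycleR n νs τs ∧
    ∀ i j, 1 ≤ i → i < j → j ≤ n - 1 → ¬ (νs i = νs j ∧ τs i = τs j)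

/-- A simple left binary cycle. -/
def IsSimpleBinCycleL (P : PreProof S) (n : ℕ) (νs : ℕ → P.Node)
    (τs τs' : ℕ → S.TA) : Prop :=
  P.IsCycleL n νs τs ∧ P.IsCycleL n νs τs' ∧
    ∀ i j, 1 ≤ i → i < j → j ≤ n - 1 →
      ¬ (νs i = νs j ∧ τs i = τs j ∧ τs' i = τs' j)

/-- `P` is left finitely progressing w.r.t. `(ν0, τ0)`. -/
def FinProgL (P : PreProof S) (ν0 : P.Node) (τ0 : S.TA) : Prop :=
  ∀ (ν1 ν2 : P.Node) (τ1 τ2 : S.TA) (α : Ordl),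
    P.ReachL ν0 τ0 ν1 τ1 → P.δ1 ν1 ν2 τ1 τ2 = some α → α < Ordinal.omega0

/-- `P` is right finitely progressing w.r.t. `(ν0, τ0)`. -/
def FinProgR (P : PreProof S) (ν0 : P.Node) (τ0 : S.TC) : Prop :=
  ∀ (ν1 ν2 : P.Node) (τ1 τ2 : S.TC) (α : Ordl),
    P.ReachR ν0 τ0 ν1 τ1 → P.δ2 ν1 ν2 τ1 τ2 = some α → α < Ordinal.omega0

/-- `P` is dynamic w.r.t. `ν0`, `τA`, `τC`: every reachable left or right
simple cycle has strictly positive size. -/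
def Dynamic (P : PreProof S) (ν0 : P.Node) (τA : S.TA) (τC : S.TC) : Prop :=
  (∀ (n : ℕ) (νs : ℕ → P.Node) (τs : ℕ → S.TA), P.IsSimpleCycleL n νs τs →
    P.ReachL ν0 τA (νs 0) (τs 0) → 0 < P.thetaL νs τs n) ∧
  (∀ (n : ℕ) (νs : ℕ → P.Node) (τs : ℕ → S.TC), P.IsSimpleCycleR n νs τs →
    P.ReachR ν0 τC (νs 0) (τs 0) → 0 < P.thetaR νs τs n)

/-- `P` is balanced w.r.t. `(ν0, τA)`: the two components of every reachable
simple left binary cycle have equal size. -/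
def Balanced (P : PreProof S) (ν0 : P.Node) (τA : S.TA) : Prop :=
  ∀ (n : ℕ) (νs : ℕ → P.Node) (τs τs' : ℕ → S.TA), P.IsSimpleBinCycleL n νs τs τs' →
    P.ReachL ν0 τA (νs 0) (τs 0) → P.ReachL ν0 τA (νs 0) (τs' 0) →
    P.thetaL νs τs n = P.thetaL νs τs' n

/-- The trace width `W(P)`. -/
def traceWidth (P : PreProof S) : ℕ :=
  Finset.univ.sup fun ν : P.Node =>
    max (S.tvA (P.seqOf ν).1).card (S.tvC (P.seqOf ν).2).card

/-- The (binary left-hand) cycle threshold `C(P)`: the number of triples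
`(σ, σ', μ)` with `σ, σ' ∈ TraceVals_A(μ)`. -/
def cycThreshold (P : PreProof S) : ℕ :=
  ∑ ν : P.Node, (S.tvA (P.seqOf ν).1).card * (S.tvA (P.seqOf ν).1).card

/-- `maxStep(P)`: the maximum (finite) `δ1`-value over the edges of `P`. -/
def maxStepN (P : PreProof S) : ℕ :=
  sSup {k : ℕ | ∃ ν ν' τ τ', P.δ1 ν ν' τ τ' = some (k : Ordl)}

/-- The in-degree of the proof graph. -/
def inDeg (P : PreProof S) : ℕ :=
  Finset.univ.sup fun ν' : P.Node =>
    (Finset.univ.filter fun ν : P.Node => ν' ∈ P.children ν).card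

/-- The trace pair function of `P` is trace injective. -/
def TraceInjective (P : PreProof S) : Prop :=
  (∀ (ν ν' : P.Node) (τ τ' τ'' : S.TA),
    (P.δ1 ν ν' τ τ'').isSome → (P.δ1 ν ν' τ' τ'').isSome → τ = τ') ∧
  (∀ (ν ν' : P.Node) (σ σ' σ'' : S.TC),
    (P.δ2 ν ν' σ σ'').isSome → (P.δ2 ν ν' σ' σ'').isSome → σ = σ')

/-- `T_ν(σ)`: the set of antecedent trace values of `ν` equated to `σ`
by the sequent of `ν`. -/
def Tset (P : PreProof S) (O : OTF S) (ν : P.Node) (σ : S.TC) : Set S.TA :=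
  {τ : S.TA | τ ∈ S.tvA (P.seqOf ν).1 ∧ O.Equates (P.seqOf ν) τ σ}

end PreProof

/-! ### Weighted automata over the ordinal max-plus semiring -/

/-- The alphabet `Σ_P`. -/
abbrev Sig {S : CES} (P : PreProof S) : Type := P.Node ⊕ (Set S.TA × S.TC)

/-- States of the antecedent automata (`⊤ⁱ_μ` states are used only by the
approximate automata). -/
inductive AState (Node TA : Type) : Type
  | init : AState Node TA
  | pair : Node → TA → AState Node TA
  | bot : AState Node TA
  | top : AState Node TA
  | topn : Node → ℕ → AState Node TA

instance {Node TA : Type} : Inhabited (AState Node TA) := ⟨AState.init⟩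

/-- States of the consequent automaton. -/
inductive BState (Node TC : Type) : Type
  | init : BState Node TC
  | pair : Node → TC → BState Node TC
  | bot : BState Node TC

instance {Node TC : Type} : Inhabited (BState Node TC) := ⟨BState.init⟩

/-- Transition relation of the (full) antecedent automaton `𝒜^{(P,ν0)}_{(τ1,·)}`. -/
inductive ATrans {S : CES} (P : PreProof S) (O : OTF S) (ν0 : P.Node) (τ1 : S.TA) :
    AState P.Node S.TA → Sig P → AState P.Node S.TA → Prop
  | start : ATrans P O ν0 τ1 .init (Sum.inl ν0) (.pair ν0 τ1)
  | step {μ μ' : P.Node} {σ σ' : S.TA} (h1 : μ' ∈ P.children μ)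
      (h2 : (P.δ1 μ μ' σ σ').isSome) :
      ATrans P O ν0 τ1 (.pair μ σ) (Sum.inl μ') (.pair μ' σ')
  | toBot {μ : P.Node} {σ : S.TA} {σ' : S.TC} (h1 : P.Axiomatic μ)
      (h2 : σ' ∈ S.tvC (P.seqOf μ).2) (h3 : σ ∈ P.Tset O μ σ') :
      ATrans P O ν0 τ1 (.pair μ σ) (Sum.inr (P.Tset O μ σ', σ')) .bot
  | toTop {μ μ' : P.Node} {σ : S.TA} (h : μ' ∈ P.children μ) :
      ATrans P O ν0 τ1 (.pair μ σ) (Sum.inl μ') .top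
  | topLoop (μ : P.Node) : ATrans P O ν0 τ1 .top (Sum.inl μ) .top

/-- Transition relation of the approximate antecedent automaton `𝒜(n)^{(P,ν0)}_{(τ1,·)}`. -/
inductive ATransN {S : CES} (P : PreProof S) (O : OTF S) (n : ℕ) (ν0 : P.Node) (τ1 : S.TA) :
    AState P.Node S.TA → Sig P → AState P.Node S.TA → Prop
  | start : ATransN P O n ν0 τ1 .init (Sum.inl ν0) (.pair ν0 τ1)
  | step {μ μ' : P.Node} {σ σ' : S.TA} (h1 : μ' ∈ P.children μ)
      (h2 : (P.δ1 μ μ' σ σ').isSome) :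
      ATransN P O n ν0 τ1 (.pair μ σ) (Sum.inl μ') (.pair μ' σ')
  | toBot {μ : P.Node} {σ : S.TA} {σ' : S.TC} (h1 : P.Axiomatic μ)
      (h2 : σ' ∈ S.tvC (P.seqOf μ).2) (h3 : σ ∈ P.Tset O μ σ') :
      ATransN P O n ν0 τ1 (.pair μ σ) (Sum.inr (P.Tset O μ σ', σ')) .bot
  | toTopn {μ μ' : P.Node} {σ : S.TA} (h : μ' ∈ P.children μ) :
      ATransN P O n ν0 τ1 (.pair μ σ) (Sum.inl μ') (.topn μ' 1)
  | topnStay {μ μ' : P.Node} {i : ℕ} (h1 : 0 < i) (h2 : i ≤ n) (h3 : μ' ≠ μ) :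
      ATransN P O n ν0 τ1 (.topn μ i) (Sum.inl μ') (.topn μ i)
  | topnStep {μ : P.Node} {i : ℕ} (h1 : 0 < i) (h2 : i < n) :
      ATransN P O n ν0 τ1 (.topn μ i) (Sum.inl μ) (.topn μ (i + 1))

/-- Transition relation of the consequent automaton `ℬ^{(P,ν0)}_{(·,τ2)}`. -/
inductive BTrans {S : CES} (P : PreProof S) (O : OTF S) (Excl : P.Node → S.TC → Prop)
    (ν0 : P.Node) (τ2 : S.TC) :
    BState P.Node S.TC → Sig P → BState P.Node S.TC → Prop
  | start : BTrans P O Excl ν0 τ2 .init (Sum.inl ν0) (.pair ν0 τ2)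
  | step {μ μ' : P.Node} {σ σ' : S.TC} (h1 : μ' ∈ P.children μ)
      (h2 : (P.δ2 μ μ' σ σ').isSome) :
      BTrans P O Excl ν0 τ2 (.pair μ σ) (Sum.inl μ') (.pair μ' σ')
  | toBot {μ : P.Node} {σ : S.TC} (h1 : P.Axiomatic μ) (h2 : σ ∈ S.tvC (P.seqOf μ).2)
      (h3 : ¬ P.Ground O μ σ) (h4 : ¬ Excl μ σ) :
      BTrans P O Excl ν0 τ2 (.pair μ σ) (Sum.inr (P.Tset O μ σ, σ)) .bot

/-- Weight function of the antecedent automata (the only potentially non-zero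
weights sit on pair-to-pair transitions, where they are given by `δ1`). -/
def Awt {S : CES} (P : PreProof S) :
    AState P.Node S.TA → Sig P → AState P.Node S.TA → Ordl
  | .pair μ σ, _, .pair μ' σ' => (P.δ1 μ μ' σ σ').getD 0
  | _, _, _ => 0

/-- Weight function of the consequent automaton. -/
def Bwt {S : CES} (P : PreProof S) :
    BState P.Node S.TC → Sig P → BState P.Node S.TC → Ordl
  | .pair μ σ, _, .pair μ' σ' => (P.δ2 μ μ' σ σ').getD 0
  | _, _, _ => 0

/-- `q` is a run over the word `σ 0, …, σ (m-1)` (from the initial state `q0`). -/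
def IsRun {Q A : Type*} (T : Q → A → Q → Prop) (q0 : Q) (m : ℕ) (σ : ℕ → A)
    (q : ℕ → Q) : Prop :=
  q 0 = q0 ∧ ∀ i < m, T (q i) (σ i) (q (i + 1))

/-- The value of a run: the `⊗`-product (i.e. reverse ordinal sum) of the
weights of its transitions. -/
def runVal {Q A : Type*} (wt : Q → A → Q → Ordl) (m : ℕ) (σ : ℕ → A) (q : ℕ → Q) : Ordl :=
  revSum (fun i => wt (q i) (σ i) (q (i + 1))) m

/-- The quantitative language of a weighted automaton: `⊥` (i.e. `none`) if the
word admits no accepting run, and otherwise the supremum (maximum) of the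
values of its accepting runs. -/
def Lang {Q A : Type*} (T : Q → A → Q → Prop) (q0 : Q) (F : Q → Prop)
    (wt : Q → A → Q → Ordl) (m : ℕ) (σ : ℕ → A) : Option Ordl := by
  classical
  exact if (∃ q : ℕ → Q, IsRun T q0 m σ q ∧ F (q m)) then
    some (sSup {v : Ordl | ∃ q : ℕ → Q, IsRun T q0 m σ q ∧ F (q m) ∧ v = runVal wt m σ q})
  else none

/-- Ordering of quantitative language values, with `⊥ = none` below everything. -/
def OptLE : Option Ordl → Option Ordl → Prop
  | none, _ => True
  | some _, none => False
  | some a, some b => a ≤ b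

/-- Strict ordering of quantitative language values on defined (non-`⊥`) values. -/
def OptLT : Option Ordl → Option Ordl → Prop
  | none, _ => True
  | some _, none => False
  | some a, some b => a < b

/-- `∼` on language values: `<` when `strict`, else `≤`. -/
def OptOrd (strict : Bool) : Option Ordl → Option Ordl → Prop :=
  fun x y => if strict then OptLT x y else OptLE x y

/-- Final states of the antecedent automata: all non-initial states. -/
def AFinal {Node TA : Type} : AState Node TA → Prop := fun q => q ≠ .init

/-- Final states of the consequent automaton. -/
def BFinal {S : CES} (P : PreProof S) (O : OTF S) (Excl : P.Node → S.TC → Prop) :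
    BState P.Node S.TC → Prop
  | .init => False
  | .bot => True
  | .pair μ σ => ¬ Excl μ σ ∧
      ((¬ P.Axiomatic μ ∧ P.TerminalR μ σ) ∨ (P.Axiomatic μ ∧ P.Ground O μ σ))

/-- The quantitative language of `𝒜^{(P,ν0)}_{(τ1,τ2)}` (it does not depend on `τ2`). -/
def LangA {S : CES} (P : PreProof S) (O : OTF S) (ν0 : P.Node) (τ1 : S.TA) :
    ℕ → (ℕ → Sig P) → Option Ordl :=
  Lang (ATrans P O ν0 τ1) .init AFinal (Awt P)

/-- The quantitative language of `𝒜(n)^{(P,ν0)}_{(τ1,τ2)}`. -/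
def LangAN {S : CES} (P : PreProof S) (O : OTF S) (n : ℕ) (ν0 : P.Node) (τ1 : S.TA) :
    ℕ → (ℕ → Sig P) → Option Ordl :=
  Lang (ATransN P O n ν0 τ1) .init AFinal (Awt P)

/-- The quantitative language of `ℬ^{(P,ν0)}_{(τ1,τ2)}` (it does not depend on `τ1`). -/
def LangB {S : CES} (P : PreProof S) (O : OTF S) (Excl : P.Node → S.TC → Prop)
    (ν0 : P.Node) (τ2 : S.TC) : ℕ → (ℕ → Sig P) → Option Ordl :=
  Lang (BTrans P O Excl ν0 τ2) .init (BFinal P O Excl) (Bwt P)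

/-- The automaton `ℬ^{(P,ν0)}_{(·,τ2)}` is grounded: every reachable final pair
state carries a trace value that is ground w.r.t. its node. -/
def BGrounded {S : CES} (P : PreProof S) (O : OTF S) (Excl : P.Node → S.TC → Prop)
    (ν0 : P.Node) (τ2 : S.TC) : Prop :=
  ∀ (μ : P.Node) (σ : S.TC),
    (∃ (m : ℕ) (w : ℕ → Sig P) (q : ℕ → BState P.Node S.TC),
      IsRun (BTrans P O Excl ν0 τ2) .init m w q ∧ q m = .pair μ σ ∧
        BFinal P O Excl (.pair μ σ)) →
    P.Ground O μ σ

/-- Collapse the graded sink states of an approximate automaton onto `⊤`. -/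
def collapseTop {Node TA : Type} : AState Node TA → AState Node TA
  | .topn _ _ => .top
  | q => q

/-- The number of occurrences of the letter `a` among `σ lo, …, σ (hi - 1)`. -/
def cnt {A : Type*} (σ : ℕ → A) (a : A) (lo hi : ℕ) : ℕ := by
  classical
  exact ((Finset.Ico lo hi).filter fun t => σ t = a).card

/-- The set of runs (as lists of states) of an automaton on a word. -/
def RunsOn {Q A : Type*} [Inhabited Q] (T : Q → A → Q → Prop) (q0 : Q)
    (w : List A) : Set (List Q) :=
  {l : List Q | l.length = w.length + 1 ∧ l.getD 0 default = q0 ∧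
    ∀ i, ∀ h : i < w.length, T (l.getD i default) (w.get ⟨i, h⟩) (l.getD (i + 1) default)}

end

/-- The canonical state sequence `q_𝒞 (ν 0, τ 0) (ν 1, τ 1) …` of the
consequent automaton along a path/trace. -/
def bRunStates {S : CES} (P : PreProof S) (νs : ℕ → P.Node) (τs : ℕ → S.TC) :
    ℕ → BState P.Node S.TC :=
  fun i => match i with
    | 0 => BState.init
    | Nat.succ j => BState.pair (νs j) (τs j)

/-!
A pair-to-pair transition of `ℬ` exists exactly where `δ2` is defined, so the runs of `ℬ` through
pair states are exactly the right-hand traces, and they automatically follow a path. A trace value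
that is terminal and not excluded at the last node falls into one of three cases: the node is not
axiomatic, or it is axiomatic and the value is ground, or it is axiomatic and the value is not
ground. In the first two cases the pair state is final, and in the third it steps to `⊥`; these are
all the ways a run can be accepted there. Entering the first pair state and stepping to `⊥` have
weight `0`, so the value of either run is the reverse sum of the `δ2`-values along the trace.
-/

theorem revSum_congr {d e : ℕ → Ordl} {k : ℕ} (h : ∀ i < k, d i = e i) :
    revSum d k = revSum e k := by
  induction k with
  | zero => rfl
  | succ k ih =>
    rw [revSum, revSum, h k k.lt_succ_self, ih fun i hi => h i (hi.trans k.lt_succ_self)]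

theorem revSum_succ' (d : ℕ → Ordl) (k : ℕ) :
    revSum d (k + 1) = revSum (fun i => d (i + 1)) k + d 0 := by
  induction k with
  | zero => simp only [revSum, add_zero, zero_add]
  | succ k ih => rw [revSum, ih, ← add_assoc, revSum]

/-- The word `w 0 ⋯ w (m-1) a`, extending the first `m` letters of `w` by the letter `a`.
All positions from `m` on carry `a`. -/
def extendWord {A : Type*} (m : ℕ) (w : ℕ → A) (a : A) : ℕ → A :=
  fun i => if i < m then w i else a

/-- The state sequence `q 0 ⋯ q m x`, extending a run of `m` transitions by one further state.
All positions from `m + 1` on carry `x`. -/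
def extendRun {Q : Type*} (m : ℕ) (q : ℕ → Q) (x : Q) : ℕ → Q :=
  fun i => if i ≤ m then q i else x

section Extension

variable {Q A : Type*} {m i : ℕ} (w : ℕ → A) (q : ℕ → Q) (a : A) (x : Q)

theorem extendWord_of_lt (hi : i < m) : extendWord m w a i = w i := if_pos hi

theorem extendWord_self : extendWord m w a m = a := if_neg (lt_irrefl m)

theorem extendRun_of_le (hi : i ≤ m) : extendRun m q x i = q i := if_pos hi

theorem extendRun_succ : extendRun m q x (m + 1) = x := if_neg m.not_succ_le_self

theorem isRun_succ_iff {T : Q → A → Q → Prop} {q0 : Q} :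
    IsRun T q0 (m + 1) w q ↔ IsRun T q0 m w q ∧ T (q m) (w m) (q (m + 1)) := by
  simp only [IsRun, Nat.forall_lt_succ_right, and_assoc]

theorem isRun_extend_iff {T : Q → A → Q → Prop} {q0 : Q} :
    IsRun T q0 (m + 1) (extendWord m w a) (extendRun m q x) ↔
      IsRun T q0 m w q ∧ T (q m) a x := by
  have isRun_prefix : IsRun T q0 m (extendWord m w a) (extendRun m q x) ↔ IsRun T q0 m w q := by
    refine and_congr (by rw [extendRun_of_le q x m.zero_le]) (forall₂_congr fun i hi => ?_)
    rw [extendWord_of_lt w a hi, extendRun_of_le q x hi.le, extendRun_of_le q x hi]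
  rw [isRun_succ_iff, isRun_prefix, extendWord_self, extendRun_of_le q x le_rfl, extendRun_succ]

theorem runVal_extend (wt : Q → A → Q → Ordl) :
    runVal wt (m + 1) (extendWord m w a) (extendRun m q x) =
      wt (q m) a x + runVal wt m w q := by
  have prefix_value : runVal wt m (extendWord m w a) (extendRun m q x) = runVal wt m w q :=
    revSum_congr fun i hi => by
      rw [extendWord_of_lt w a hi, extendRun_of_le q x hi.le, extendRun_of_le q x hi]
  rw [← prefix_value, runVal, revSum, extendWord_self, extendRun_of_le q x le_rfl,
    extendRun_succ, runVal]

end Extension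

namespace PreProof

variable {S : CES} {P : PreProof S}

theorem Axiomatic.terminalR {ν : P.Node} (h : P.Axiomatic ν) (σ : S.TC) : P.TerminalR ν σ := by
  intro ν' hν'
  rw [h] at hν'
  exact absurd hν' List.not_mem_nil

theorem FollowsR.isPath {n k : ℕ} {νs : ℕ → P.Node} {τs : ℕ → S.TC}
    (h : P.FollowsR n νs k τs) : P.IsPath k νs :=
  fun i hi => (P.δ2_dom _ _ _ _ (h.2.2 i hi)).1

theorem followsR_succ_iff {k : ℕ} {νs : ℕ → P.Node} {τs : ℕ → S.TC}
    (hmem0 : τs 0 ∈ S.tvC (P.seqOf (νs 0)).2) :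
    P.FollowsR (k + 1) νs (k + 1) τs ↔
      ∀ i < k, (P.δ2 (νs i) (νs (i + 1)) (τs i) (τs (i + 1))).isSome := by
  refine ⟨fun h i hi => h.2.2 i (Nat.succ_lt_succ hi), fun hδ => ⟨le_rfl, ?_, ?_⟩⟩
  · rintro (_ | i) hi
    · exact hmem0
    · exact (P.δ2_dom _ _ _ _ (hδ i (Nat.lt_of_succ_lt_succ hi))).2.2
  · exact fun i hi => hδ i (Nat.lt_of_succ_lt_succ hi)

end PreProof

section ConsequentAutomaton

variable {S : CES} {P : PreProof S} {O : OTF S} {Excl : P.Node → S.TC → Prop}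

theorem bTrans_pair_pair_iff {ν0 μ μ' : P.Node} {τ0 σ σ' : S.TC} :
    BTrans P O Excl ν0 τ0 (.pair μ σ) (Sum.inl μ') (.pair μ' σ') ↔
      (P.δ2 μ μ' σ σ').isSome := by
  constructor
  · rintro (_ | ⟨_, hδ⟩)
    exact hδ
  · exact fun hδ => .step (P.δ2_dom _ _ _ _ hδ).1 hδ

theorem bTrans_pair_bot_iff {ν0 μ : P.Node} {τ0 σ : S.TC} :
    BTrans P O Excl ν0 τ0 (.pair μ σ) (Sum.inr (P.Tset O μ σ, σ)) .bot ↔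
      P.Axiomatic μ ∧ σ ∈ S.tvC (P.seqOf μ).2 ∧ ¬ P.Ground O μ σ ∧ ¬ Excl μ σ := by
  constructor
  · rintro (_ | _ | ⟨hax, hmem, hground, hexcl⟩)
    exact ⟨hax, hmem, hground, hexcl⟩
  · rintro ⟨hax, hmem, hground, hexcl⟩
    exact .toBot hax hmem hground hexcl

theorem terminalR_and_not_excl_iff {ν0 μ : P.Node} {τ0 σ : S.TC}
    (hmem : σ ∈ S.tvC (P.seqOf μ).2) :
    P.TerminalR μ σ ∧ ¬ Excl μ σ ↔
      BFinal P O Excl (.pair μ σ) ∨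
        BTrans P O Excl ν0 τ0 (.pair μ σ) (Sum.inr (P.Tset O μ σ, σ)) .bot := by
  have terminal_of_axiomatic : P.Axiomatic μ → P.TerminalR μ σ := fun hax => hax.terminalR σ
  rw [bTrans_pair_bot_iff, BFinal]
  tauto

theorem BFinal.not_axiomatic_or_ground {μ : P.Node} {σ : S.TC}
    (h : BFinal P O Excl (.pair μ σ)) : ¬ P.Axiomatic μ ∨ P.Ground O μ σ :=
  h.2.imp And.left And.right

theorem isRun_bRunStates_iff {k : ℕ} {νs : ℕ → P.Node} {τs : ℕ → S.TC} :
    IsRun (BTrans P O Excl (νs 0) (τs 0)) .init (k + 1) (fun i => Sum.inl (νs i))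
        (bRunStates P νs τs) ↔
      ∀ i < k, (P.δ2 (νs i) (νs (i + 1)) (τs i) (τs (i + 1))).isSome := by
  constructor
  · exact fun h i hi => bTrans_pair_pair_iff.mp (h.2 (i + 1) (Nat.succ_lt_succ hi))
  · refine fun hδ => ⟨rfl, ?_⟩
    rintro (_ | i) hi
    · exact .start
    · exact bTrans_pair_pair_iff.mpr (hδ i (Nat.lt_of_succ_lt_succ hi))

theorem runVal_bRunStates (k : ℕ) (νs : ℕ → P.Node) (τs : ℕ → S.TC) :
    runVal (Bwt P) (k + 1) (fun i => Sum.inl (νs i)) (bRunStates P νs τs) =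
      P.thetaR νs τs (k + 1) :=
  (revSum_succ' _ k).trans (add_zero _)

theorem runVal_extend_bot (k : ℕ) (νs : ℕ → P.Node) (τs : ℕ → S.TC) (a : Sig P) :
    runVal (Bwt P) (k + 2) (extendWord (k + 1) (fun i => Sum.inl (νs i)) a)
        (extendRun (k + 1) (bRunStates P νs τs) .bot) = P.thetaR νs τs (k + 1) := by
  rw [runVal_extend, runVal_bRunStates]
  exact zero_add _

end ConsequentAutomaton

theorem accepting_runs_characterise_positive_maximal_traces_general {S : CES} (P : PreProof S)
    (O : OTF S) (Excl : P.Node → S.TC → Prop) (k : ℕ) (νs : ℕ → P.Node) (τs : ℕ → S.TC)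
    (hmem0 : τs 0 ∈ S.tvC (P.seqOf (νs 0)).2) :
    let T := BTrans P O Excl (νs 0) (τs 0)
    let w : ℕ → Sig P := fun i => Sum.inl (νs i)
    let q := bRunStates P νs τs
    let w' := extendWord (k + 1) w (Sum.inr (P.Tset O (νs k) (τs k), τs k))
    let q' := extendRun (k + 1) q .bot
    ((P.IsPath (k + 1) νs ∧ P.FollowsR (k + 1) νs (k + 1) τs ∧
        P.TerminalR (νs k) (τs k) ∧ ¬ Excl (νs k) (τs k)) ↔
      ((IsRun T .init (k + 1) w q ∧ BFinal P O Excl (q (k + 1)) ∧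
          (¬ P.Axiomatic (νs k) ∨ P.Ground O (νs k) (τs k))) ∨
        (IsRun T .init (k + 2) w' q' ∧ BFinal P O Excl (q' (k + 2)) ∧
          P.Axiomatic (νs k)))) ∧
    (IsRun T .init (k + 1) w q → runVal (Bwt P) (k + 1) w q = P.thetaR νs τs (k + 1)) ∧
    (IsRun T .init (k + 2) w' q' → runVal (Bwt P) (k + 2) w' q' = P.thetaR νs τs (k + 1)) := by
  intro T w q w' q'
  have run_iff : IsRun T .init (k + 1) w q ↔ P.FollowsR (k + 1) νs (k + 1) τs :=
    isRun_bRunStates_iff.trans (PreProof.followsR_succ_iff hmem0).symm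
  have extended_run_iff : IsRun T .init (k + 2) w' q' ↔ IsRun T .init (k + 1) w q ∧
      T (.pair (νs k) (τs k)) (Sum.inr (P.Tset O (νs k) (τs k), τs k)) .bot :=
    isRun_extend_iff w q _ _
  refine ⟨⟨?_, ?_⟩, fun _ => runVal_bRunStates k νs τs, fun _ => runVal_extend_bot k νs τs _⟩
  · rintro ⟨-, hfollows, hmaximal⟩
    obtain hfinal | hbot :=
      (terminalR_and_not_excl_iff (hfollows.2.1 k k.lt_succ_self)).mp hmaximal
    · exact .inl ⟨run_iff.mpr hfollows, hfinal, hfinal.not_axiomatic_or_ground⟩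
    · refine .inr ⟨extended_run_iff.mpr ⟨run_iff.mpr hfollows, hbot⟩, ?_,
        (bTrans_pair_bot_iff.mp hbot).1⟩
      rw [show q' (k + 2) = .bot from extendRun_succ q _]
      trivial
  · intro haccepting
    have ⟨hrun, hend⟩ : IsRun T .init (k + 1) w q ∧ (BFinal P O Excl (.pair (νs k) (τs k)) ∨
        T (.pair (νs k) (τs k)) (Sum.inr (P.Tset O (νs k) (τs k), τs k)) .bot) := by
      obtain ⟨hrun, hfinal, -⟩ | ⟨hrun', -, -⟩ := haccepting
      · exact ⟨hrun, .inl hfinal⟩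
      · exact (extended_run_iff.mp hrun').imp_right .inr
    have hfollows := run_iff.mp hrun
    exact ⟨hfollows.isPath, hfollows,
      (terminalR_and_not_excl_iff (hfollows.2.1 k k.lt_succ_self)).mpr hend⟩

/-- **Accepting Runs Characterise Positive Maximal Traces.**
`τs 0, …, τs (n-1)` is a positive maximal right-hand trace following the path
`νs` in a cyclic proof `P` iff `ρ` is an accepting run of
`ℬ^{(P,νs 0)}_{(τ'', τs 0)}` where either (i)
`ρ = q_𝒞 (νs 0) (νs 0, τs 0) … (νs (n-1)) (νs (n-1), τs (n-1))` — in which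
case the trace is fully maximal or `τs (n-1)` is ground w.r.t. `νs (n-1)` —
or (ii) `ρ` additionally steps to `⊥` via the letter
`(T_{νs (n-1)}(τs (n-1)), τs (n-1))` — in which case the trace is partially
maximal.  Moreover `V(ρ) = Θ_νs(τs)`. -/
theorem accepting_runs_characterise_positive_maximal_traces
    (S : CES) (P : PreProof S) (O : OTF S)
    (Excl : P.Node → S.TC → Prop) (hExcl : P.ExclOK O Excl)
    (hproof : P.IsCyclicProof)
    (τ'' : S.TA) (n : ℕ) (hn : 1 ≤ n) (νs : ℕ → P.Node)
    (τs : ℕ → S.TC) (hmem0 : τs 0 ∈ S.tvC (P.seqOf (νs 0)).2) :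
    ((P.IsPath n νs ∧ P.FollowsR n νs n τs ∧
        P.TerminalR (νs (n - 1)) (τs (n - 1)) ∧ ¬ Excl (νs (n - 1)) (τs (n - 1))) ↔
      ((IsRun (BTrans P O Excl (νs 0) (τs 0)) BState.init n (fun i => Sum.inl (νs i))
          (bRunStates P νs τs) ∧
        BFinal P O Excl (bRunStates P νs τs n) ∧
        (¬ P.Axiomatic (νs (n - 1)) ∨ P.Ground O (νs (n - 1)) (τs (n - 1)))) ∨
       (IsRun (BTrans P O Excl (νs 0) (τs 0)) BState.init (n + 1)
          (fun i => if i < n then Sum.inl (νs i)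
            else Sum.inr (P.Tset O (νs (n - 1)) (τs (n - 1)), τs (n - 1)))
          (fun i => if i ≤ n then bRunStates P νs τs i else BState.bot) ∧
        BFinal P O Excl ((fun i => if i ≤ n then bRunStates P νs τs i else BState.bot) (n + 1)) ∧
        P.Axiomatic (νs (n - 1))))) ∧
    (IsRun (BTrans P O Excl (νs 0) (τs 0)) BState.init n (fun i => Sum.inl (νs i))
        (bRunStates P νs τs) →
      runVal (Bwt P) n (fun i => Sum.inl (νs i)) (bRunStates P νs τs) = P.thetaR νs τs n) ∧
    (IsRun (BTrans P O Excl (νs 0) (τs 0)) BState.init (n + 1)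
        (fun i => if i < n then Sum.inl (νs i)
          else Sum.inr (P.Tset O (νs (n - 1)) (τs (n - 1)), τs (n - 1)))
        (fun i => if i ≤ n then bRunStates P νs τs i else BState.bot) →
      runVal (Bwt P) (n + 1)
        (fun i => if i < n then Sum.inl (νs i)
          else Sum.inr (P.Tset O (νs (n - 1)) (τs (n - 1)), τs (n - 1)))
        (fun i => if i ≤ n then bRunStates P νs τs i else BState.bot) = P.thetaR νs τs n) := by
  obtain ⟨k, rfl⟩ := Nat.exists_eq_add_of_le' hn
  exact accepting_runs_characterise_positive_maximal_traces_general P O Excl k νs τs hmem0
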